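/- Let n ≥ 1 and define the matrix B : Matrix (Fin n) (Fin n) ℝ by B(i,j) = 1/(2i + 2j + 3), where i, j ∈ {0, 1, ..., n-1} are 0-indexed (so the first row is 1/3, 1/5, 1/7, ...). Then B is invertible and the sum of all entries of B⁻¹ equals 2n² + n. -/

import Mathlib

/-- The Hilbert-type matrix with entries `1/(2i+2j+3)` (0-indexed). -/
noncomputable def hilbertShifted (n : ℕ) : Matrix (Fin n) (Fin n) ℝ :=
  Matrix.of fun i j => 1 / (2 * ((i : ℕ) : ℝ) + 2 * ((j : ℕ) : ℝ) + 3)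

/-!
Let `C = (1 / (x i - y j))` be an `n × n` Cauchy matrix, `f = ∏ (X - x i)` and `g = ∏ (X - y j)`.
For `deg p < deg g` the partial fraction expansion of `p / g` says that `C` maps the residues of
`p / g` to the values of `p / g` at the nodes `x i`. Any values can be prescribed there by
interpolation, so `C` is invertible. The choice `p = g - f` gives the value `1` at every `x i`;
hence the entries of `C⁻¹` add up to the sum of the residues of `(g - f) / g`, which is the
coefficient of `X ^ (n - 1)` in `g - f`, namely `∑ x i - ∑ y j`.
-/

section Nodal

open Finset Lagrange Polynomial

variable {ι κ R : Type*} [CommRing R] {s : Finset ι} {t : Finset κ}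

lemma degree_nodal_sub_nodal_lt [Nontrivial R] (h : #s = #t) (v : ι → R) (w : κ → R) :
    (nodal s v - nodal t w).degree < #s := by
  rw [← degree_nodal (R := R) (v := v)]
  refine degree_sub_lt_left ?_ nodal_ne_zero ?_
  · rw [degree_nodal, degree_nodal, h]
  · rw [nodal_monic.leadingCoeff, nodal_monic.leadingCoeff]

lemma coeff_nodal_sub_nodal (h : #s = #t) (v : ι → R) (w : κ → R) :
    (nodal s v - nodal t w).coeff (#s - 1) = ∑ j ∈ t, w j - ∑ i ∈ s, v i := by
  rcases s.eq_empty_or_nonempty with rfl | hs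
  · obtain rfl : t = ∅ := card_eq_zero.mp h.symm
    simp
  · have ht : 0 < #t := h ▸ hs.card_pos
    rw [coeff_sub, nodal_eq, prod_X_sub_C_coeff_card_pred s v hs.card_pos, h, nodal_eq,
      prod_X_sub_C_coeff_card_pred t w ht]
    ring

end Nodal

section NodalResidue

open Finset Lagrange Polynomial

variable {ι F : Type*} [Field F] [DecidableEq ι] {s : Finset ι} {v : ι → F} {p : F[X]}

/-- The residue of the rational function `p / nodal s v` at its simple pole `v i`, for `i ∈ s`
and `v` injective on `s`. -/
noncomputable def nodalResidue (s : Finset ι) (v : ι → F) (p : F[X]) (i : ι) : F :=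
  nodalWeight s v i * p.eval (v i)

lemma sum_nodalResidue (hv : Set.InjOn v s) (hp : p.degree < #s) :
    ∑ i ∈ s, nodalResidue s v p i = p.coeff (#s - 1) := by
  rw [coeff_eq_sum hv hp]
  refine sum_congr rfl fun i _ => ?_
  rw [nodalResidue, nodalWeight, prod_inv_distrib, div_eq_inv_mul]

lemma sum_inv_sub_mul_nodalResidue (hv : Set.InjOn v s) (hp : p.degree < #s) {x : F}
    (hx : ∀ i ∈ s, x ≠ v i) :
    ∑ i ∈ s, (x - v i)⁻¹ * nodalResidue s v p i = p.eval x / (nodal s v).eval x := by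
  rw [eq_div_iff (eval_nodal_not_at_node hx), mul_comm]
  calc (nodal s v).eval x * ∑ i ∈ s, (x - v i)⁻¹ * nodalResidue s v p i
      = (nodal s v).eval x * ∑ i ∈ s, nodalWeight s v i * (x - v i)⁻¹ * p.eval (v i) := by
        simp only [nodalResidue, mul_assoc, mul_left_comm]
    _ = (interpolate s v fun i => p.eval (v i)).eval x :=
        (eval_interpolate_not_at_node _ hx).symm
    _ = p.eval x := by rw [← eq_interpolate hv hp]

end NodalResidue

section Matrix

open Matrix

lemma sum_sum_inv_of_mulVec_eq_one {ι R : Type*} [Fintype ι] [DecidableEq ι] [CommRing R]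
    {A : Matrix ι ι R} (hA : IsUnit A) {u : ι → R} (hu : A *ᵥ u = 1) :
    ∑ i, ∑ j, A⁻¹ i j = ∑ i, u i := by
  have := hA.invertible
  have hinv : A⁻¹ *ᵥ 1 = u := inv_mulVec_eq_vec hu.symm
  simp only [← hinv, mulVec, dotProduct_one]

end Matrix

section CauchyMatrix

open Finset Lagrange Matrix Polynomial

variable {ι m n F : Type*} [Field F]

/-- The Cauchy matrix of the nodes `x` and `y`, in the sign convention with entries
`1 / (x i - y j)`. -/
def cauchyMatrix (x : m → F) (y : n → F) : Matrix m n F :=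
  Matrix.of fun i j => (x i - y j)⁻¹

lemma cauchyMatrix_mulVec_nodalResidue [Fintype n] [DecidableEq n] {x : m → F} {y : n → F}
    (hy : y.Injective) (hxy : ∀ i j, x i ≠ y j) {p : F[X]} (hp : p.degree < Fintype.card n) :
    cauchyMatrix x y *ᵥ nodalResidue univ y p =
      fun i => p.eval (x i) / (nodal univ y).eval (x i) :=
  funext fun i => sum_inv_sub_mul_nodalResidue hy.injOn hp fun j _ => hxy i j

lemma cauchyMatrix_mulVec_surjective [Fintype m] [Fintype n] {x : m → F} {y : n → F}
    (hmn : Fintype.card m ≤ Fintype.card n) (hx : x.Injective) (hy : y.Injective)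
    (hxy : ∀ i j, x i ≠ y j) : (cauchyMatrix x y).mulVec.Surjective := by
  classical
  intro b
  let p : F[X] := interpolate univ x fun i => b i * (nodal univ y).eval (x i)
  have hp : p.degree < Fintype.card n :=
    (degree_interpolate_lt _ hx.injOn).trans_le (by exact_mod_cast hmn)
  refine ⟨nodalResidue univ y p, ?_⟩
  rw [cauchyMatrix_mulVec_nodalResidue hy hxy hp]
  funext i
  rw [eval_interpolate_at_node _ hx.injOn (mem_univ i),
    mul_div_cancel_right₀ _ (eval_nodal_not_at_node fun j _ => hxy i j)]

variable [Fintype ι] [DecidableEq ι] {x y : ι → F}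

lemma isUnit_cauchyMatrix (hx : x.Injective) (hy : y.Injective) (hxy : ∀ i j, x i ≠ y j) :
    IsUnit (cauchyMatrix x y) :=
  mulVec_surjective_iff_isUnit.mp (cauchyMatrix_mulVec_surjective le_rfl hx hy hxy)

lemma cauchyMatrix_mulVec_nodalResidue_nodal_sub_nodal (hy : y.Injective)
    (hxy : ∀ i j, x i ≠ y j) :
    cauchyMatrix x y *ᵥ nodalResidue univ y (nodal univ y - nodal univ x) = 1 := by
  rw [cauchyMatrix_mulVec_nodalResidue hy hxy (degree_nodal_sub_nodal_lt rfl y x)]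
  funext i
  rw [eval_sub, eval_nodal_at_node (mem_univ i), sub_zero,
    div_self (eval_nodal_not_at_node fun j _ => hxy i j), Pi.one_apply]

theorem sum_sum_inv_cauchyMatrix (hx : x.Injective) (hy : y.Injective)
    (hxy : ∀ i j, x i ≠ y j) :
    ∑ i, ∑ j, (cauchyMatrix x y)⁻¹ i j = ∑ i, x i - ∑ i, y i := by
  rw [sum_sum_inv_of_mulVec_eq_one (isUnit_cauchyMatrix hx hy hxy)
      (cauchyMatrix_mulVec_nodalResidue_nodal_sub_nodal hy hxy),
    sum_nodalResidue hy.injOn (degree_nodal_sub_nodal_lt rfl y x), coeff_nodal_sub_nodal rfl]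

end CauchyMatrix

lemma hilbertShifted_eq_cauchyMatrix (n : ℕ) :
    hilbertShifted n =
      cauchyMatrix (fun i : Fin n => 2 * (i : ℝ) + 3) (fun j : Fin n => -(2 * (j : ℝ))) := by
  ext i j
  rw [hilbertShifted, cauchyMatrix, Matrix.of_apply, Matrix.of_apply, one_div]
  ring

lemma sum_two_mul_add_three_sub_sum_neg_two_mul (n : ℕ) :
    ∑ i : Fin n, (2 * (i : ℝ) + 3) - ∑ j : Fin n, -(2 * (j : ℝ)) = 2 * (n : ℝ) ^ 2 + n := by
  induction n with
  | zero => simp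
  | succ n ih =>
    simp only [Fin.sum_univ_castSucc, Fin.val_castSucc, Fin.val_last]
    push_cast
    linear_combination ih

/-- The matrix `B(i,j) = 1/(2i+2j+3)` (0-indexed) is invertible and the sum of all
entries of its inverse equals `2n² + n`. -/
theorem hilbertShifted_inverse_entry_sum (n : ℕ) (hn : 1 ≤ n) :
    IsUnit (hilbertShifted n) ∧
      ∑ i, ∑ j, (hilbertShifted n)⁻¹ i j = 2 * (n : ℝ) ^ 2 + n := by
  have hx : Function.Injective fun i : Fin n => 2 * (i : ℝ) + 3 := fun i j h => by
    simpa [Fin.val_inj] using h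
  have hy : Function.Injective fun j : Fin n => -(2 * (j : ℝ)) := fun i j h => by
    simpa [Fin.val_inj] using h
  have hxy : ∀ i j : Fin n, 2 * (i : ℝ) + 3 ≠ -(2 * (j : ℝ)) := fun i j h => by
    have : (0 : ℝ) < 2 * i + 3 + 2 * j := by positivity
    linarith
  rw [hilbertShifted_eq_cauchyMatrix]
  exact ⟨isUnit_cauchyMatrix hx hy hxy,
    (sum_sum_inv_cauchyMatrix hx hy hxy).trans (sum_two_mul_add_three_sub_sum_neg_two_mul n)⟩
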